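/- Let M be an invertible symmetric n×n real matrix, V : ℝⁿ → ℝ differentiable with gradient V_q, μ : ℝⁿ → ℝ^{m×n}, and h > 0. Define the discrete Lagrangian L_d^B(x, y) = h · ( (1/2)·((y−x)/h)ᵀ M ((y−x)/h) − V(y) ). Then for q_{k−1}, q_k, q_{k+1} ∈ ℝⁿ and λ ∈ ℝᵐ, the GNI equations D₁L_d^B(q_k, q_{k+1}) + D₂L_d^B(q_{k−1}, q_k) = μ(q_k)ᵀ λ and μ(q_k) M⁻¹ ( D₁L_d^B(q_k, q_{k+1}) − D₂L_d^B(q_{k−1}, q_k) ) = 0 hold if and only if, with λ̃ = λ/h, the nonholonomic Euler B scheme holds: q_{k+1} − 2q_k + q_{k−1} = −h² M⁻¹ ( V_q(q_k) + μ(q_k)ᵀ λ̃ ) and μ(q_k) ( (q_{k+1} − q_{k−1})/(2h) − (h/2) M⁻¹ V_q(q_k) ) = 0. -/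

import Mathlib

/-!
The partial gradients of the discrete Lagrangian are computed by differentiating along lines
(`hasDerivAt_quadratic_line`, where the symmetry of `M` enters) and using uniqueness of derivatives:
`D₁ = -(1/h) M (q₂ - q₁)` and `D₂ = (1/h) M (q₁ - q₀) - h V_q(q₁)`.
Hence, since `M` is invertible, `q₂ - 2 q₁ + q₀ = -h M⁻¹ (D₁ + D₂ + h V_q)`, and
`M⁻¹ (D₁ - D₂)` is `-2` times the vector annihilated by `μ(q₁)` in the Euler B scheme, so each of
the two GNI equations is equivalent to the corresponding equation of the scheme.
-/


open Matrix

/-- The continuous linear functional on `ℝⁿ` given by dot product with `w`;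
used to express gradients of scalar functions. -/
noncomputable def vecCLM {n : ℕ} (w : Fin n → ℝ) : (Fin n → ℝ) →L[ℝ] ℝ :=
  ∑ i, w i • ContinuousLinearMap.proj (R := ℝ) (φ := fun _ : Fin n => ℝ) i

theorem vecCLM_apply {n : ℕ} (w v : Fin n → ℝ) : vecCLM w v = w ⬝ᵥ v := by
  simp [vecCLM, dotProduct]

theorem hasDerivAt_quadratic_line {n : ℕ} (M : Matrix (Fin n) (Fin n) ℝ) (hMsymm : Mᵀ = M)
    (u v : Fin n → ℝ) :
    HasDerivAt (fun t : ℝ => (u + t • v) ⬝ᵥ M *ᵥ (u + t • v)) (2 * ((M *ᵥ u) ⬝ᵥ v)) 0 := by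
  have hsymm : u ⬝ᵥ M *ᵥ v = (M *ᵥ u) ⬝ᵥ v := by
    rw [dotProduct_mulVec, ← mulVec_transpose, hMsymm]
  have hexp : (fun t : ℝ => (u + t • v) ⬝ᵥ M *ᵥ (u + t • v)) =
      fun t : ℝ => u ⬝ᵥ M *ᵥ u + t * (2 * ((M *ᵥ u) ⬝ᵥ v)) + t ^ 2 * (v ⬝ᵥ M *ᵥ v) := by
    funext t
    simp only [mulVec_add, mulVec_smul, add_dotProduct, dotProduct_add, smul_dotProduct,
      dotProduct_smul, smul_eq_mul, hsymm, dotProduct_comm v (M *ᵥ u)]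
    ring
  rw [hexp]
  have hd := (((hasDerivAt_id (0 : ℝ)).mul_const (2 * ((M *ᵥ u) ⬝ᵥ v))).const_add
    (u ⬝ᵥ M *ᵥ u)).add (((hasDerivAt_id (0 : ℝ)).pow 2).mul_const (v ⬝ᵥ M *ᵥ v))
  exact hd.congr_deriv (by simp)

/-- A gradient is determined by the derivatives along lines. -/
theorem eq_of_hasFDerivAt_of_line {n : ℕ} {f : (Fin n → ℝ) → ℝ} {x D E : Fin n → ℝ}
    (hD : HasFDerivAt f (vecCLM D) x)
    (hE : ∀ v, HasDerivAt (fun t : ℝ => f (x + t • v)) (E ⬝ᵥ v) 0) : D = E := by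
  refine dotProduct_eq D E fun v => ?_
  have hl : HasDerivAt (fun t : ℝ => f (x + t • v)) (vecCLM D v) 0 := hD.hasLineDerivAt v
  rw [vecCLM_apply] at hl
  exact hl.unique (hE v)

/-- For the discrete Lagrangian
`L_d^B(x,y) = h((1/2)((y−x)/h)ᵀ M ((y−x)/h) − V(y))`, the GNI equations
`D₁L_d^B(q_k,q_{k+1}) + D₂L_d^B(q_{k−1},q_k) = μ(q_k)ᵀλ` and
`μ(q_k) M⁻¹ (D₁L_d^B(q_k,q_{k+1}) − D₂L_d^B(q_{k−1},q_k)) = 0`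
hold iff, with `λ̃ = λ/h`, the nonholonomic Euler B scheme holds:
`q_{k+1} − 2q_k + q_{k−1} = −h² M⁻¹(V_q(q_k) + μ(q_k)ᵀλ̃)` and
`μ(q_k)((q_{k+1} − q_{k−1})/(2h) − (h/2) M⁻¹ V_q(q_k)) = 0`. -/
theorem gni_eulerB_scheme {n m : ℕ}
    (M : Matrix (Fin n) (Fin n) ℝ) (hM : IsUnit M) (hMsymm : Mᵀ = M)
    (V : (Fin n → ℝ) → ℝ) (Vq : (Fin n → ℝ) → Fin n → ℝ)
    (hV : ∀ x, HasFDerivAt V (vecCLM (Vq x)) x)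
    (μ : (Fin n → ℝ) → Matrix (Fin m) (Fin n) ℝ)
    (h : ℝ) (hh : 0 < h)
    (Ld : (Fin n → ℝ) → (Fin n → ℝ) → ℝ)
    (hLd : ∀ x y, Ld x y =
      h * ((1 / 2) * (((1 / h) • (y - x)) ⬝ᵥ M *ᵥ ((1 / h) • (y - x))) - V y))
    (q0 q1 q2 : Fin n → ℝ) (lam : Fin m → ℝ)
    (D1 D2 : Fin n → ℝ)
    (hD1 : HasFDerivAt (fun x => Ld x q2) (vecCLM D1) q1)
    (hD2 : HasFDerivAt (fun y => Ld q0 y) (vecCLM D2) q1) :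
    (D1 + D2 = (μ q1)ᵀ *ᵥ lam ∧ μ q1 *ᵥ (M⁻¹ *ᵥ (D1 - D2)) = 0) ↔
      (q2 - (2 : ℝ) • q1 + q0 =
          -(h ^ 2) • (M⁻¹ *ᵥ (Vq q1 + (μ q1)ᵀ *ᵥ (h⁻¹ • lam))) ∧
        μ q1 *ᵥ ((1 / (2 * h)) • (q2 - q0) - (h / 2) • (M⁻¹ *ᵥ Vq q1)) = 0) := by
  have hh0 : h ≠ 0 := hh.ne'
  have hdet : IsUnit M.det := (Matrix.isUnit_iff_isUnit_det M).1 hM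
  have hinv : ∀ w : Fin n → ℝ, M⁻¹ *ᵥ (M *ᵥ w) = w := fun w => by
    rw [mulVec_mulVec, nonsing_inv_mul M hdet, one_mulVec]
  have hinv' : ∀ w : Fin n → ℝ, M *ᵥ (M⁻¹ *ᵥ w) = w := fun w => by
    rw [mulVec_mulVec, mul_nonsing_inv M hdet, one_mulVec]
  have e1 : D1 = -(1 / h) • (M *ᵥ (q2 - q1)) := by
    refine eq_of_hasFDerivAt_of_line hD1 fun v => ?_
    have hq := ((((hasDerivAt_quadratic_line M hMsymm ((1 / h) • (q2 - q1))
      (-(1 / h) • v)).const_mul (1 / 2)).sub_const (V q2)).const_mul h)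
    refine (hq.congr_deriv ?_).congr_of_eventuallyEq (Filter.Eventually.of_forall fun t => ?_)
    · simp only [mulVec_smul, smul_dotProduct, dotProduct_smul, smul_eq_mul]
      field_simp
    · have hpt : (1 / h) • (q2 - (q1 + t • v)) = (1 / h) • (q2 - q1) + t • -(1 / h) • v := by
        module
      beta_reduce
      rw [hLd, hpt]
  have e2 : D2 = (1 / h) • (M *ᵥ (q1 - q0)) - h • Vq q1 := by
    refine eq_of_hasFDerivAt_of_line hD2 fun v => ?_
    have hVl : HasDerivAt (fun t : ℝ => V (q1 + t • v)) (vecCLM (Vq q1) v) 0 :=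
      (hV q1).hasLineDerivAt v
    rw [vecCLM_apply] at hVl
    have hq := ((((hasDerivAt_quadratic_line M hMsymm ((1 / h) • (q1 - q0))
      ((1 / h) • v)).const_mul (1 / 2)).sub hVl).const_mul h)
    refine (hq.congr_deriv ?_).congr_of_eventuallyEq (Filter.Eventually.of_forall fun t => ?_)
    · simp only [mulVec_smul, smul_dotProduct, dotProduct_smul, smul_eq_mul, sub_dotProduct]
      field_simp
    · have hpt : (1 / h) • (q1 + t • v - q0) = (1 / h) • (q1 - q0) + t • (1 / h) • v := by
        module
      beta_reduce
      rw [hLd, hpt]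
      rfl
  have hsum : D1 + D2 = -(1 / h) • (M *ᵥ (q2 - (2 : ℝ) • q1 + q0)) - h • Vq q1 := by
    rw [e1, e2]
    simp only [mulVec_add, mulVec_sub, mulVec_smul]
    module
  have hdiff : M⁻¹ *ᵥ (D1 - D2) =
      (-2 : ℝ) • ((1 / (2 * h)) • (q2 - q0) - (h / 2) • (M⁻¹ *ᵥ Vq q1)) := by
    have hD : D1 - D2 = M *ᵥ (-(1 / h) • (q2 - q0)) + h • Vq q1 := by
      rw [e1, e2]
      simp only [mulVec_sub, mulVec_smul]
      module
    rw [hD, mulVec_add, hinv, mulVec_smul]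
    ext i
    simp only [Pi.add_apply, Pi.sub_apply, Pi.smul_apply, smul_eq_mul]
    field_simp
    ring
  refine and_congr ?_ ?_
  · rw [hsum, mulVec_smul]
    set w := q2 - (2 : ℝ) • q1 + q0
    set p := (μ q1)ᵀ *ᵥ lam
    constructor
    · intro H
      have hMw : M *ᵥ w = -(h ^ 2) • (Vq q1 + h⁻¹ • p) := by
        rw [← H]
        ext i
        simp only [Pi.add_apply, Pi.sub_apply, Pi.smul_apply, smul_eq_mul]
        field_simp
        ring
      rw [← mulVec_smul, ← hMw, hinv]
    · intro H
      rw [H, mulVec_smul, hinv']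
      ext i
      simp only [Pi.add_apply, Pi.sub_apply, Pi.smul_apply, smul_eq_mul]
      field_simp
      ring
  · rw [hdiff, mulVec_smul, smul_eq_zero_iff_right (by norm_num)]
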